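/- Let m > n ≥ 1, let F_3 ∈ K[y_1,…,y_n] ⊂ K[y_1,…,y_m] be a non-degenerate homogeneous cubic form, and let H be a homogeneous quadratic form each of whose monomials is of the form y_i y_j with 1 ≤ i ≤ n and 1 ≤ j ≤ m. Then the Artinian Gorenstein local K-algebras A_{F_3 + y_{n+1}^2 + ⋯ + y_m^2 + H} and A_{F_3 + y_{n+1}^2 + ⋯ + y_m^2} are isomorphic as K-algebras. -/

import Mathlib

/-- The contraction (derivative) action of the power series ring
`R = K[[x_1,…,x_n]]` on the polynomial ring `P = K[y_1,…,y_n]`: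
`f ∘ g = f(∂/∂y_1, …, ∂/∂y_n)(g)`.  It is defined on the monomial basis by
`x^α ∘ y^β = (∏ i, (β i)!/(β i - α i)!) y^(β-α)` (zero unless `α ≤ β`), the honest
iterated partial derivative, and extended `K`-linearly. -/
noncomputable def contract {K : Type*} [Field K] {n : ℕ} (f : MvPowerSeries (Fin n) K) :
    MvPolynomial (Fin n) K →ₗ[K] MvPolynomial (Fin n) K :=
  (MvPolynomial.basisMonomials (Fin n) K).constr K fun β =>
    ∑ α ∈ Finset.Iic β,
      (MvPowerSeries.coeff α f * ∏ i, ((β i).descFactorial (α i) : K)) •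
        MvPolynomial.monomial (β - α) (1 : K)

theorem contract_add {K : Type*} [Field K] {n : ℕ} (f g : MvPowerSeries (Fin n) K) :
    contract (f + g) = contract f + contract g := by
  unfold contract
  rw [← map_add]
  congr 1
  funext β
  simp only [Pi.add_apply]
  rw [← Finset.sum_add_distrib]
  exact Finset.sum_congr rfl fun α _ => by rw [map_add, add_mul, add_smul]

theorem contract_zero {K : Type*} [Field K] {n : ℕ} :
    contract (0 : MvPowerSeries (Fin n) K) = 0 := by
  unfold contract
  convert map_zero ((MvPolynomial.basisMonomials (Fin n) K).constr
    (M' := MvPolynomial (Fin n) K) K) using 2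
  funext β
  simp

/-- The annihilator `Ann_R(F) = Ann_R(⟨F⟩_R)` of (the cyclic `R`-submodule of
`P` generated by) a polynomial `F` under the contraction action; an ideal of
`R = K[[x_1,…,x_n]]`.  The Artinian Gorenstein local algebra associated to `F`
is `A_F = R ⧸ annR F`. -/
noncomputable def annR {K : Type*} [Field K] {n : ℕ} (F : MvPolynomial (Fin n) K) :
    Ideal (MvPowerSeries (Fin n) K) where
  carrier := {f | ∀ u : MvPowerSeries (Fin n) K, contract (u * f) F = 0}
  zero_mem' := fun u => by rw [mul_zero, contract_zero]; rfl
  add_mem' := fun {a b} ha hb u => by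
    rw [mul_add, contract_add, LinearMap.add_apply, ha u, hb u, add_zero]
  smul_mem' := fun c f hf u => by
    rw [smul_eq_mul, ← mul_assoc]; exact hf (u * c)

/-- The linear form `l 1 • x_1 + ⋯ + l n • x_n` in `R = K[[x_1,…,x_n]]`. -/
noncomputable def linForm {K : Type*} [Field K] {n : ℕ} (l : Fin n → K) :
    MvPowerSeries (Fin n) K :=
  ∑ i, MvPowerSeries.monomial (Finsupp.single i 1) (l i)

/-- A polynomial `F ∈ K[y_1,…,y_n]` is non-degenerate if `Ann_R(F)` contains no
nonzero linear form; equivalently, the embedding dimension of `A_F` is `n`,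
i.e. `HF_{A_F}(1) = n`. -/
def nondegenerate {K : Type*} [Field K] {n : ℕ} (F : MvPolynomial (Fin n) K) : Prop :=
  ∀ l : Fin n → K, linForm l ∈ annR F → l = 0

/-- The functional `F ↦ (f ∘ F)(0)`. -/
noncomputable def lam {K : Type*} [Field K] {n : ℕ} (f : MvPowerSeries (Fin n) K) :
    MvPolynomial (Fin n) K →ₗ[K] K :=
  (MvPolynomial.basisMonomials (Fin n) K).constr K fun β =>
    MvPowerSeries.coeff β f * ∏ i, ((β i).factorial : K)

section helpers
variable {K : Type*} [Field K] {n m : ℕ}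

lemma lam_monomial (f : MvPowerSeries (Fin n) K) (β : Fin n →₀ ℕ) (c : K) :
    lam f (MvPolynomial.monomial β c) =
      c * (MvPowerSeries.coeff β f * ∏ i, ((β i).factorial : K)) := by
  have h : MvPolynomial.monomial β c = c • MvPolynomial.basisMonomials (Fin n) K β := by
    simp [MvPolynomial.smul_monomial]
  rw [h, map_smul, lam, Module.Basis.constr_basis, smul_eq_mul]

lemma contract_monomial' (f : MvPowerSeries (Fin n) K) (β : Fin n →₀ ℕ) (c : K) :
    contract f (MvPolynomial.monomial β c) = c • ∑ α ∈ Finset.Iic β,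
      (MvPowerSeries.coeff α f * ∏ i, ((β i).descFactorial (α i) : K)) •
        MvPolynomial.monomial (β - α) (1 : K) := by
  have h : MvPolynomial.monomial β c = c • MvPolynomial.basisMonomials (Fin n) K β := by
    simp [MvPolynomial.smul_monomial]
  rw [h, map_smul, contract, Module.Basis.constr_basis]

lemma lam_eq_sum (f : MvPowerSeries (Fin n) K) (F : MvPolynomial (Fin n) K) :
    lam f F = ∑ β ∈ F.support, F.coeff β *
      (MvPowerSeries.coeff β f * ∏ i, ((β i).factorial : K)) := by
  conv_lhs => rw [F.as_sum]
  rw [map_sum]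
  exact Finset.sum_congr rfl fun β _ => lam_monomial f β _

lemma lam_add (f g : MvPowerSeries (Fin n) K) (F : MvPolynomial (Fin n) K) :
    lam (f + g) F = lam f F + lam g F := by
  simp only [lam_eq_sum, ← Finset.sum_add_distrib, map_add]
  exact Finset.sum_congr rfl fun β _ => by ring

lemma lam_smul (c : K) (f : MvPowerSeries (Fin n) K) (F : MvPolynomial (Fin n) K) :
    lam (c • f) F = c * lam f F := by
  simp only [lam_eq_sum, Finset.mul_sum]
  exact Finset.sum_congr rfl fun β _ => by
    rw [map_smul, smul_eq_mul]; ring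

lemma lam_eq_zero (f : MvPowerSeries (Fin n) K) (F : MvPolynomial (Fin n) K)
    (h : ∀ β ∈ F.support, MvPowerSeries.coeff β f = 0) : lam f F = 0 := by
  rw [lam_eq_sum]
  exact Finset.sum_eq_zero fun β hβ => by rw [h β hβ]; ring

lemma coeff_contract (f : MvPowerSeries (Fin n) K) (F : MvPolynomial (Fin n) K)
    (γ : Fin n →₀ ℕ) :
    (contract f F).coeff γ * ∏ i, ((γ i).factorial : K) =
      lam (MvPowerSeries.monomial γ 1 * f) F := by
  induction F using MvPolynomial.induction_on' with
  | add p q hp hq => rw [map_add, map_add, MvPolynomial.coeff_add, add_mul, hp, hq]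
  | monomial β c =>
    rw [lam_monomial, contract_monomial', MvPolynomial.coeff_smul, MvPolynomial.coeff_sum,
      MvPowerSeries.coeff_monomial_mul]
    simp only [MvPolynomial.coeff_smul, MvPolynomial.coeff_monomial, smul_eq_mul]
    by_cases h : γ ≤ β
    · rw [Finset.sum_eq_single (β - γ)]
      · rw [if_pos h, tsub_tsub_cancel_of_le h, if_pos rfl, mul_one, one_mul, mul_assoc, mul_assoc,
          ← Finset.prod_mul_distrib]
        congr 2
        refine Finset.prod_congr rfl fun i _ => ?_
        have hi : γ i ≤ β i := h i
        have := Nat.factorial_mul_descFactorial (n := β i) (k := β i - γ i) (Nat.sub_le _ _)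
        rw [Nat.sub_sub_self hi] at this
        rw [Finsupp.tsub_apply, ← this]; push_cast; ring
      · intro α hα hne
        rw [if_neg, mul_zero]
        rintro rfl
        exact hne (tsub_tsub_cancel_of_le (Finset.mem_Iic.1 hα)).symm
      · intro hh
        exact absurd (Finset.mem_Iic.2 tsub_le_self) hh
    · rw [if_neg h, Finset.sum_eq_zero]
      · ring
      · intro α _
        rw [if_neg, mul_zero]
        rintro rfl
        exact h tsub_le_self

lemma mem_annR_iff [CharZero K] (f : MvPowerSeries (Fin n) K) (F : MvPolynomial (Fin n) K) :
    f ∈ annR F ↔ ∀ u, lam (u * f) F = 0 := by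
  have h0 : f ∈ annR F ↔ ∀ u, contract (u * f) F = 0 := Iff.rfl
  rw [h0]
  constructor
  · intro h u
    have := coeff_contract (u * f) F 0
    rw [h u] at this
    simpa using this.symm
  · intro h u
    ext γ
    have := coeff_contract (u * f) F γ
    rw [← mul_assoc, h] at this
    have h2 : (∏ i, ((γ i).factorial : K)) ≠ 0 :=
      Finset.prod_ne_zero_iff.2 fun i _ => by exact_mod_cast Nat.factorial_ne_zero _
    simpa [h2] using this

/-- polynomial version -/
noncomputable def lamP (F p : MvPolynomial (Fin n) K) : K :=
  lam (p : MvPowerSeries (Fin n) K) F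

lemma lamP_add (F p q : MvPolynomial (Fin n) K) : lamP F (p + q) = lamP F p + lamP F q := by
  simp [lamP, lam_add]

lemma lamP_smul (c : K) (F p : MvPolynomial (Fin n) K) : lamP F (c • p) = c * lamP F p := by
  simp only [lamP, ← lam_smul]
  congr 1

lemma lamP_addF (F G p : MvPolynomial (Fin n) K) : lamP (F + G) p = lamP F p + lamP G p := by
  simp [lamP]

lemma lamP_eq_zero (F p : MvPolynomial (Fin n) K)
    (h : ∀ β ∈ F.support, p.coeff β = 0) : lamP F p = 0 :=
  lam_eq_zero _ _ fun β hβ => by rw [MvPolynomial.coeff_coe]; exact h β hβ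

lemma lamP_hom {F p : MvPolynomial (Fin n) K} {d e : ℕ} (hF : F.IsHomogeneous d)
    (hp : p.IsHomogeneous e) (h : d ≠ e) : lamP F p = 0 :=
  lamP_eq_zero _ _ fun β hβ => hp.coeff_eq_zero fun h' => h <| by
    by_contra hne
    exact MvPolynomial.mem_support_iff.1 hβ (hF.coeff_eq_zero fun h2 => hne (h2.symm.trans h'))

lemma lamP_sub (F p q : MvPolynomial (Fin n) K) : lamP F (p - q) = lamP F p - lamP F q := by
  have := lamP_add F (p - q) q
  rw [sub_add_cancel] at this
  rw [this]; ring

open MvPolynomial in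
lemma lamP_pow {F p : MvPolynomial (Fin n) K} (hF : ∀ β ∈ F.support, β.degree < 4)
    (hp : p ∈ idealOfVars (Fin n) K ^ 4) : lamP F p = 0 :=
  lamP_eq_zero _ _ fun β hβ => (mem_pow_idealOfVars_iff' 4 p).1 hp β (hF β hβ)

/-- any power series agrees with a polynomial up to order four -/
lemma mem_annR_of_low [CharZero K] {F : MvPolynomial (Fin n) K}
    (hF : ∀ β ∈ F.support, β.degree < 4) (f : MvPowerSeries (Fin n) K)
    (hf : ∀ β, β.degree < 4 → MvPowerSeries.coeff β f = 0) : f ∈ annR F := by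
  rw [mem_annR_iff]
  intro u
  refine lam_eq_zero _ _ fun β hβ => ?_
  apply MvPowerSeries.coeff_of_lt_order
  have h1 : ((4 : ℕ) : ℕ∞) ≤ f.order := MvPowerSeries.nat_le_order hf
  calc ((β.degree : ℕ) : ℕ∞) < (4 : ℕ) := by exact_mod_cast hF β hβ
    _ ≤ f.order := h1
    _ ≤ u.order + f.order := le_add_self
    _ ≤ _ := MvPowerSeries.le_order_mul

/-- projection -/
noncomputable def proj (F : MvPolynomial (Fin n) K) :
    MvPolynomial (Fin n) K →ₐ[K] (MvPowerSeries (Fin n) K ⧸ annR F) :=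
  (Ideal.Quotient.mkₐ K (annR F)).comp (MvPolynomial.coeToMvPowerSeries.algHom K)

lemma proj_apply (F p : MvPolynomial (Fin n) K) :
    proj F p = Ideal.Quotient.mk (annR F) (p : MvPowerSeries (Fin n) K) := by
  simp [proj, MvPolynomial.coeToMvPowerSeries.algHom_apply]

lemma proj_surj [CharZero K] {F : MvPolynomial (Fin n) K}
    (hF : ∀ β ∈ F.support, β.degree < 4) : Function.Surjective (proj F) := by
  intro a
  obtain ⟨f, rfl⟩ := Ideal.Quotient.mk_surjective a
  refine ⟨MvPowerSeries.truncTotal 4 f, ?_⟩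
  rw [proj_apply, Ideal.Quotient.eq]
  refine mem_annR_of_low hF _ fun β hβ => ?_
  rw [map_sub, MvPolynomial.coeff_coe, MvPowerSeries.coeff_truncTotal _ hβ, sub_self]

lemma proj_eq_zero_iff [CharZero K] {F : MvPolynomial (Fin n) K}
    (hF : ∀ β ∈ F.support, β.degree < 4) (p : MvPolynomial (Fin n) K) :
    proj F p = 0 ↔ ∀ u, lamP F (u * p) = 0 := by
  rw [proj_apply, Ideal.Quotient.eq_zero_iff_mem, mem_annR_iff]
  constructor
  · intro h u
    have := h u
    simpa [lamP] using this
  · intro h u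
    have h1 := h (MvPowerSeries.truncTotal 4 u)
    have h2 : (u - (MvPowerSeries.truncTotal 4 u : MvPolynomial (Fin n) K)) ∈ annR F := by
      refine mem_annR_of_low hF _ fun β hβ => ?_
      rw [map_sub, MvPolynomial.coeff_coe, MvPowerSeries.coeff_truncTotal _ hβ, sub_self]
    have h3 := (mem_annR_iff _ _).1 h2 p
    have : u * (p : MvPowerSeries (Fin n) K) =
      (((MvPowerSeries.truncTotal 4 u * p : MvPolynomial (Fin n) K)) : MvPowerSeries (Fin n) K)
        + p * (u - (MvPowerSeries.truncTotal 4 u : MvPolynomial (Fin n) K)) := by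
      push_cast; ring
    rw [this, lam_add, h3, add_zero]
    exact h1

section subst
open MvPolynomial
variable (φ : MvPolynomial (Fin n) K →ₐ[K] MvPolynomial (Fin n) K)
  (hφ : ∀ i, φ (X i) - X i ∈ idealOfVars (Fin n) K ^ 2)
include hφ

lemma phi_sub0 (f : MvPolynomial (Fin n) K) : φ f - f ∈ idealOfVars (Fin n) K := by
  have h : ((Ideal.Quotient.mkₐ K (idealOfVars (Fin n) K)).comp φ) =
      Ideal.Quotient.mkₐ K (idealOfVars (Fin n) K) := by
    ext i
    exact Ideal.Quotient.eq.2 (Ideal.pow_le_self two_ne_zero (hφ i))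
  exact Ideal.Quotient.eq.1 (DFunLike.congr_fun h f)

lemma phi_sub1 (f : MvPolynomial (Fin n) K) (hf : f ∈ idealOfVars (Fin n) K) :
    φ f - f ∈ idealOfVars (Fin n) K ^ 2 := by
  induction hf using Submodule.span_induction with
  | mem x hx => obtain ⟨i, rfl⟩ := hx; exact hφ i
  | zero => simp
  | add x y _ _ hx hy =>
    have : φ (x + y) - (x + y) = (φ x - x) + (φ y - y) := by rw [map_add]; ring
    rw [this]; exact Ideal.add_mem _ hx hy
  | smul a x hxm hx =>
    have : φ (a • x) - a • x = φ a * (φ x - x) + (φ a - a) * x := by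
      rw [smul_eq_mul, map_mul]; ring
    rw [this]
    exact Ideal.add_mem _ (Ideal.mul_mem_left _ _ hx)
      (by rw [pow_two]; exact Ideal.mul_mem_mul (phi_sub0 φ hφ a) hxm)

lemma phi_mem (f : MvPolynomial (Fin n) K) (hf : f ∈ idealOfVars (Fin n) K) :
    φ f ∈ idealOfVars (Fin n) K := by
  have := Ideal.add_mem _ (phi_sub0 φ hφ f) hf
  rwa [sub_add_cancel] at this

lemma phi_sub (d : ℕ) : ∀ f ∈ idealOfVars (Fin n) K ^ d,
    φ f - f ∈ idealOfVars (Fin n) K ^ (d + 1) := by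
  induction d with
  | zero => intro f _; simpa using phi_sub0 φ hφ f
  | succ d ih =>
    intro f hf
    rw [pow_succ'] at hf
    induction hf using Submodule.mul_induction_on' with
    | mem_mul_mem a ha b hb =>
      have : φ (a * b) - a * b = φ a * (φ b - b) + (φ a - a) * b := by
        rw [map_mul]; ring
      rw [this]
      refine Ideal.add_mem _ ?_ ?_
      · rw [pow_succ']
        exact Ideal.mul_mem_mul (phi_mem φ hφ a ha) (ih b hb)
      · have := Ideal.mul_mem_mul (phi_sub1 φ hφ a ha) hb
        rw [← pow_add] at this
        rwa [show d + 1 + 1 = 2 + d by ring]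
    | add x _ y _ hx hy =>
      have : φ (x + y) - (x + y) = (φ x - x) + (φ y - y) := by rw [map_add]; ring
      rw [this]; exact Ideal.add_mem _ hx hy

lemma phi_surj_aux (k : ℕ) : ∀ d, d + k = 4 → ∀ f ∈ idealOfVars (Fin n) K ^ d,
    ∃ g, φ g - f ∈ idealOfVars (Fin n) K ^ 4 := by
  induction k with
  | zero =>
    intro d hd f hf
    obtain rfl : d = 4 := hd
    exact ⟨0, by simpa using hf⟩
  | succ k ih =>
    intro d hd f hf
    obtain ⟨g, hg⟩ := ih (d + 1) (by omega) (φ f - f) (phi_sub φ hφ d f hf)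
    refine ⟨f - g, ?_⟩
    have : φ (f - g) - f = -(φ g - (φ f - f)) := by rw [map_sub]; ring
    rw [this]; exact neg_mem hg

lemma phi_surj (f : MvPolynomial (Fin n) K) : ∃ g, φ g - f ∈ idealOfVars (Fin n) K ^ 4 :=
  phi_surj_aux φ hφ 4 0 rfl f (by simp)

lemma main_iso [CharZero K] (F G : MvPolynomial (Fin n) K)
    (hF : ∀ β ∈ F.support, β.degree < 4) (hG : ∀ β ∈ G.support, β.degree < 4)
    (h : ∀ f, lamP G (φ f) = lamP F f) :
    Nonempty ((MvPowerSeries (Fin n) K ⧸ annR F) ≃ₐ[K] (MvPowerSeries (Fin n) K ⧸ annR G)) := by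
  have hs : Function.Surjective ((proj G).comp φ) := by
    intro a
    obtain ⟨f, rfl⟩ := proj_surj hG a
    obtain ⟨g, hg⟩ := phi_surj φ hφ f
    refine ⟨g, ?_⟩
    rw [AlgHom.comp_apply, ← sub_eq_zero, ← map_sub, proj_eq_zero_iff hG]
    intro u
    exact lamP_pow hG (Ideal.mul_mem_left _ _ hg)
  have hk : RingHom.ker (proj F) = RingHom.ker ((proj G).comp φ) := by
    ext p
    rw [RingHom.mem_ker, RingHom.mem_ker, AlgHom.comp_apply, proj_eq_zero_iff hF,
      proj_eq_zero_iff hG]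
    constructor
    · intro hp u
      obtain ⟨g, hg⟩ := phi_surj φ hφ u
      have h1 := hp g
      rw [← h, map_mul] at h1
      have h2 := lamP_pow hG (Ideal.mul_mem_left _ (φ p) hg)
      rw [mul_sub, lamP_sub, mul_comm, h1, zero_sub, neg_eq_zero, mul_comm] at h2
      exact h2
    · intro hp u
      rw [← h, map_mul]
      exact hp _
  exact ⟨((Ideal.quotientKerAlgEquivOfSurjective (proj_surj hF)).symm.trans
    (Ideal.quotientEquivAlgOfEq K hk)).trans (Ideal.quotientKerAlgEquivOfSurjective hs)⟩

end subst

section existence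
open MvPolynomial

lemma exists_quad [CharZero K] (F : MvPolynomial (Fin n) K) (hF : F.IsHomogeneous 3)
    (hnd : nondegenerate F) (c : Fin n → K) :
    ∃ p : MvPolynomial (Fin n) K, p.IsHomogeneous 2 ∧ ∀ i, lamP F (X i * p) = c i := by
  have hF4 : ∀ β ∈ F.support, β.degree < 4 := fun β hβ => by
    by_contra hne
    exact MvPolynomial.mem_support_iff.1 hβ (hF.coeff_eq_zero fun h2 => hne (by omega))
  let T : MvPolynomial (Fin n) K →ₗ[K] (Fin n → K) :=
    { toFun := fun p i => lamP F (X i * p)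
      map_add' := fun p q => by ext i; simp [mul_add, lamP_add]
      map_smul' := fun a p => by ext i; simp [lamP_smul] }
  have hT : LinearMap.range T = ⊤ := by
    by_contra hne
    obtain ⟨l, hl0, hl⟩ := Submodule.exists_le_ker_of_lt_top _ (lt_top_iff_ne_top.2 hne)
    apply hl0
    have hlin : linForm (fun i => l (Pi.single i 1)) ∈ annR F := by
      have e : linForm (fun i => l (Pi.single i 1)) =
          ((∑ i, l (Pi.single i 1) • X i : MvPolynomial (Fin n) K) :
            MvPowerSeries (Fin n) K) := by
        ext β
        rw [MvPolynomial.coeff_coe]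
        simp [linForm, MvPolynomial.coeff_sum, MvPowerSeries.coeff_monomial, eq_comm, X,
          MvPolynomial.smul_monomial, coeff_monomial]
      rw [e, ← Ideal.Quotient.eq_zero_iff_mem, ← proj_apply, proj_eq_zero_iff hF4]
      intro u
      have h1 : l (T u) = 0 := hl ⟨u, rfl⟩
      rw [LinearMap.pi_apply_eq_sum_univ] at h1
      rw [Finset.mul_sum]
      have hsum : ∀ (s : Finset (Fin n)) (g : Fin n → MvPolynomial (Fin n) K),
          lamP F (∑ i ∈ s, g i) = ∑ i ∈ s, lamP F (g i) := by
        intro s g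
        exact map_sum (AddMonoidHom.mk' (lamP F) (lamP_add F)) g s
      rw [hsum, ← h1]
      refine Finset.sum_congr rfl fun i _ => ?_
      rw [mul_smul_comm, lamP_smul, mul_comm u, smul_eq_mul, mul_comm]
      congr 1
      congr 1
      ext j
      simp [Pi.single_apply, eq_comm]
    have := hnd _ hlin
    refine LinearMap.pi_ext' fun i => ?_
    ext
    simpa using congrFun this i
  obtain ⟨p, hp⟩ : ∃ p, T p = c := by
    have : c ∈ LinearMap.range T := hT ▸ Submodule.mem_top
    exact this
  refine ⟨homogeneousComponent 2 p, homogeneousComponent_isHomogeneous _ _, fun i => ?_⟩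
  rw [← hp]
  change _ = lamP F (X i * p)
  rw [← sub_eq_zero, ← lamP_sub, ← mul_sub]
  refine lamP_eq_zero _ _ fun β hβ => ?_
  have hd : β.degree = 3 := by
    by_contra hne
    exact MvPolynomial.mem_support_iff.1 hβ (hF.coeff_eq_zero hne)
  rw [coeff_X_mul']
  split_ifs with hi
  · rw [coeff_sub, coeff_homogeneousComponent, if_pos, sub_self]
    have hle : Finsupp.single i 1 ≤ β := by
      rw [Finsupp.single_le_iff]
      exact Nat.one_le_iff_ne_zero.2 (Finsupp.mem_support_iff.1 hi)
    have := congrArg Finsupp.degree (tsub_add_cancel_of_le hle)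
    rw [map_add, Finsupp.degree_single, hd] at this
    omega
  · rfl

lemma lamP_rename (e : Fin n → Fin m) (he : Function.Injective e) (F p : MvPolynomial (Fin n) K) :
    lamP (rename e F) (rename e p) = lamP F p := by
  induction F using MvPolynomial.induction_on' with
  | add a b ha hb => rw [map_add, lamP_addF, lamP_addF, ha, hb]
  | monomial β c =>
    rw [rename_monomial, lamP, lamP, lam_monomial, lam_monomial, coeff_coe, coeff_coe,
      coeff_rename_mapDomain _ he]
    congr 2
    have h1 : ∀ (k : ℕ) (γ : Fin k →₀ ℕ), ∏ i, ((γ i).factorial : K) =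
        γ.prod fun _ a => (a.factorial : K) := fun k γ =>
      (Finsupp.prod_fintype γ (fun _ a => (a.factorial : K)) (by simp)).symm
    rw [h1, h1, Finsupp.prod_mapDomain_index_inj he]

lemma lamP_rename_X (e : Fin n → Fin m) (i : Fin m) (hi : i ∉ Set.range e)
    (F : MvPolynomial (Fin n) K) (p : MvPolynomial (Fin m) K) :
    lamP (rename e F) (X i * p) = 0 := by
  refine lamP_eq_zero _ _ fun β hβ => ?_
  rw [coeff_X_mul', if_neg]
  intro h
  obtain ⟨u, hu, _⟩ := coeff_rename_ne_zero _ _ _ (MvPolynomial.mem_support_iff.1 hβ)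
  rw [Finsupp.mem_support_iff, ← hu, Finsupp.mapDomain_of_notMem_range _ _ hi] at h
  exact h rfl

lemma lamP_sq_rename (e : Fin n → Fin m) (j : Fin m) (hj : j ∉ Set.range e)
    (p : MvPolynomial (Fin n) K) : lamP (X j ^ 2) (rename e p) = 0 := by
  rw [X_pow_eq_monomial, lamP, lam_monomial, coeff_coe, coeff_rename_eq_zero]
  · ring
  · intro u hu
    have := congrArg (fun v => v j) hu
    simp [Finsupp.mapDomain_of_notMem_range _ _ hj] at this

lemma lamP_sumF {ι : Type*} (s : Finset ι) (g : ι → MvPolynomial (Fin n) K)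
    (p : MvPolynomial (Fin n) K) :
    lamP (∑ i ∈ s, g i) p = ∑ i ∈ s, lamP (g i) p := by
  simp [lamP]

end existence

open MvPolynomial in
lemma hom_mem_pow {p : MvPolynomial (Fin n) K} {d e : ℕ} (hp : p.IsHomogeneous d) (h : e ≤ d) :
    p ∈ idealOfVars (Fin n) K ^ e :=
  (mem_pow_idealOfVars_iff' e p).2 fun β hβ => hp.coeff_eq_zero (by omega)

open MvPolynomial in
lemma X_mem (i : Fin n) : (X i : MvPolynomial (Fin n) K) ∈ idealOfVars (Fin n) K :=
  Ideal.subset_span ⟨i, rfl⟩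

open MvPolynomial in
lemma deg_lt {F : MvPolynomial (Fin n) K} {d : ℕ} (hd : d < 4) (hF : F.IsHomogeneous d) :
    ∀ β, 4 ≤ β.degree → F.coeff β = 0 :=
  fun β hβ => hF.coeff_eq_zero (by omega)

lemma finsupp_cases (s : Fin n →₀ ℕ) : s = 0 ∨ ∃ i t, s = Finsupp.single i 1 + t := by
  by_cases h : s = 0
  · exact Or.inl h
  · obtain ⟨i, hi⟩ := Finsupp.ne_iff.1 h
    refine Or.inr ⟨i, s - Finsupp.single i 1, (add_tsub_cancel_of_le ?_).symm⟩
    rw [Finsupp.single_le_iff]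
    exact Nat.one_le_iff_ne_zero.2 hi

open MvPolynomial in
lemma mono_cases (P : MvPolynomial (Fin n) K → Prop) (h0 : P 1) (h1 : ∀ i, P (X i))
    (h2 : ∀ i j, P (X i * X j)) (h3 : ∀ i j k, P (X i * X j * X k))
    (h4 : ∀ p ∈ idealOfVars (Fin n) K ^ 4, P p)
    (hadd : ∀ p q, P p → P q → P (p + q)) (hsmul : ∀ (c : K) p, P p → P (c • p))
    (p : MvPolynomial (Fin n) K) : P p := by
  induction p using MvPolynomial.induction_on' with
  | add p q hp hq => exact hadd p q hp hq
  | monomial s c =>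
    have : monomial s c = c • (monomial s 1 : MvPolynomial (Fin n) K) := by
      simp [smul_monomial]
    rw [this]
    apply hsmul
    have e : ∀ (i : Fin n) t, (monomial (Finsupp.single i 1 + t) 1 : MvPolynomial (Fin n) K) =
        X i * monomial t 1 := fun i t => by rw [X, monomial_mul, one_mul]
    have e0 : (monomial (0 : Fin n →₀ ℕ) 1 : MvPolynomial (Fin n) K) = 1 := rfl
    rcases finsupp_cases s with rfl | ⟨i, s, rfl⟩
    · rw [e0]; exact h0
    rcases finsupp_cases s with rfl | ⟨j, s, rfl⟩
    · rw [e, e0, mul_one]; exact h1 i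
    rcases finsupp_cases s with rfl | ⟨k, s, rfl⟩
    · rw [e, e, e0, mul_one]; exact h2 i j
    rcases finsupp_cases s with rfl | ⟨l, s, rfl⟩
    · rw [e, e, e, e0, mul_one, ← mul_assoc]; exact h3 i j k
    apply h4
    rw [mem_pow_idealOfVars_iff']
    intro x hx
    rw [coeff_monomial, if_neg]
    rintro rfl
    simp only [map_add, Finsupp.degree_single] at hx
    omega

end helpers

/-- For `m > n ≥ 1`, a non-degenerate cubic form `F_3 ∈ K[y_1,…,y_n]` and a
quadratic form `H` each of whose monomials is divisible by some `y_i` with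
`i ≤ n`, the algebras `A_{F_3 + y_{n+1}^2 + ⋯ + y_m^2 + H}` and
`A_{F_3 + y_{n+1}^2 + ⋯ + y_m^2}` are isomorphic as `K`-algebras. -/
theorem aF_plus_mixed_quadratic_iso
    {K : Type*} [Field K] [IsAlgClosed K] [CharZero K] {m n : ℕ}
    (hn : 1 ≤ n) (hnm : n < m)
    (F3 : MvPolynomial (Fin n) K)
    (hF3 : F3.IsHomogeneous 3) (hnd : nondegenerate F3)
    (H : MvPolynomial (Fin m) K) (hH : H.IsHomogeneous 2)
    (hHmix : ∀ β ∈ H.support, ∃ i : Fin m, (i : ℕ) < n ∧ β i ≠ 0) :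
    Nonempty ((MvPowerSeries (Fin m) K ⧸
        annR (K := K) (n := m) (MvPolynomial.rename (Fin.castLE hnm.le) F3 +
          (∑ j ∈ Finset.univ.filter (fun j : Fin m => n ≤ (j : ℕ)),
            MvPolynomial.X j ^ 2) + H)) ≃ₐ[K]
      (MvPowerSeries (Fin m) K ⧸
        annR (K := K) (n := m) (MvPolynomial.rename (Fin.castLE hnm.le) F3 +
          ∑ j ∈ Finset.univ.filter (fun j : Fin m => n ≤ (j : ℕ)),
            MvPolynomial.X j ^ 2))) := by
  classical
  have hinj : Function.Injective (Fin.castLE hnm.le) := Fin.castLE_injective _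
  have hrange : ∀ j : Fin m, n ≤ (j : ℕ) → j ∉ Set.range (Fin.castLE hnm.le) := by
    rintro j hj ⟨i, rfl⟩
    have := i.2
    simp at hj
    omega
  set e := Fin.castLE hnm.le with he
  set Q : MvPolynomial (Fin m) K := ∑ j ∈ Finset.univ.filter (fun j : Fin m => n ≤ (j : ℕ)),
            MvPolynomial.X j ^ 2 with hQ
  set F := MvPolynomial.rename e F3 with hF
  have hFh : F.IsHomogeneous 3 := hF3.rename_isHomogeneous
  have hQh : Q.IsHomogeneous 2 := by
    refine MvPolynomial.IsHomogeneous.sum _ _ _ fun j _ => ?_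
    simpa using (MvPolynomial.isHomogeneous_X K j).pow 2
  have hdG : ∀ β ∈ (F + Q).support, β.degree < 4 := by
    intro β hβ
    by_contra hne
    apply MvPolynomial.mem_support_iff.1 hβ
    rw [MvPolynomial.coeff_add, deg_lt (by norm_num) hFh _ (not_lt.1 hne),
      deg_lt (by norm_num) hQh _ (not_lt.1 hne), add_zero]
  have hdF : ∀ β ∈ (F + Q + H).support, β.degree < 4 := by
    intro β hβ
    by_contra hne
    apply MvPolynomial.mem_support_iff.1 hβ
    rw [MvPolynomial.coeff_add, MvPolynomial.coeff_add,
      deg_lt (by norm_num) hFh _ (not_lt.1 hne), deg_lt (by norm_num) hH _ (not_lt.1 hne),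
      deg_lt (by norm_num) hQh _ (not_lt.1 hne), add_zero, add_zero]
  choose p hp2 hp using fun j : Fin m => exists_quad F3 hF3 hnd
    (fun i => if (j : ℕ) < n then lamP H (MvPolynomial.X (e i) * MvPolynomial.X j) / 2
      else lamP H (MvPolynomial.X (e i) * MvPolynomial.X j))
  let q : Fin m → MvPolynomial (Fin m) K := fun j => MvPolynomial.rename e (p j)
  have hq2 : ∀ j, (q j).IsHomogeneous 2 := fun j => (hp2 j).rename_isHomogeneous
  have hX : ∀ j : Fin m, (MvPolynomial.X j : MvPolynomial (Fin m) K).IsHomogeneous 1 :=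
    fun j => MvPolynomial.isHomogeneous_X K j
  -- values of the pairing
  have hlow : ∀ (i j : Fin m), (i : ℕ) < n → lamP F (MvPolynomial.X i * q j) =
      if (j : ℕ) < n then lamP H (MvPolynomial.X i * MvPolynomial.X j) / 2
      else lamP H (MvPolynomial.X i * MvPolynomial.X j) := by
    intro i j hi
    have hie : e ⟨i, hi⟩ = i := by ext; simp [he]
    have := hp j ⟨i, hi⟩
    rw [hie] at this
    rw [← this, ← lamP_rename e hinj, map_mul, MvPolynomial.rename_X, hie]
  have hhigh : ∀ (i j : Fin m), n ≤ (i : ℕ) → lamP F (MvPolynomial.X i * q j) = 0 :=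
    fun i j hi => lamP_rename_X e i (hrange i hi) _ _
  have hHhigh : ∀ (i j : Fin m), n ≤ (i : ℕ) → n ≤ (j : ℕ) →
      lamP H (MvPolynomial.X i * MvPolynomial.X j) = 0 := by
    intro i j hi hj
    refine lamP_eq_zero _ _ fun β hβ => ?_
    obtain ⟨k, hk, hk0⟩ := hHmix β hβ
    rw [MvPolynomial.X, MvPolynomial.X, MvPolynomial.monomial_mul, MvPolynomial.coeff_monomial,
      if_neg]
    rintro rfl
    apply hk0
    have h1 : i ≠ k := by rintro rfl; omega
    have h2 : j ≠ k := by rintro rfl; omega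
    simp [Finsupp.single_apply, h1, h2]
  have hpair : ∀ i j : Fin m, lamP F (MvPolynomial.X i * q j) + lamP F (MvPolynomial.X j * q i) =
      lamP H (MvPolynomial.X i * MvPolynomial.X j) := by
    intro i j
    rcases lt_or_ge (i : ℕ) n with hi | hi <;> rcases lt_or_ge (j : ℕ) n with hj | hj
    · rw [hlow i j hi, hlow j i hj, if_pos hi, if_pos hj, mul_comm (MvPolynomial.X j)]
      ring
    · rw [hlow i j hi, hhigh j i hj, if_neg (not_lt.2 hj), add_zero]
    · rw [hlow j i hj, hhigh i j hi, if_neg (not_lt.2 hi), zero_add, mul_comm]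
    · rw [hhigh i j hi, hhigh j i hj, hHhigh i j hi hj, add_zero]
  have hQq : ∀ i, lamP Q (q i) = 0 := by
    intro i
    rw [hQ, lamP_sumF]
    exact Finset.sum_eq_zero fun j hj =>
      lamP_sq_rename e j (hrange j (Finset.mem_filter.1 hj).2) _
  let φ : MvPolynomial (Fin m) K →ₐ[K] MvPolynomial (Fin m) K :=
    MvPolynomial.aeval fun i => MvPolynomial.X i + q i
  have hφX : ∀ i, φ (MvPolynomial.X i) = MvPolynomial.X i + q i := fun i => by simp [φ]
  have hφ : ∀ i, φ (MvPolynomial.X i) - MvPolynomial.X i ∈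
      MvPolynomial.idealOfVars (Fin m) K ^ 2 := fun i => by
    rw [hφX, add_sub_cancel_left]
    exact hom_mem_pow (hq2 i) le_rfl
  refine main_iso φ hφ _ _ hdF hdG fun f => ?_
  induction f using mono_cases with
  | h0 =>
    have h1 := MvPolynomial.isHomogeneous_one (Fin m) K
    rw [map_one, lamP_addF _ H, lamP_hom hH h1 (by norm_num), add_zero]
  | h1 i =>
    rw [hφX, lamP_add, lamP_addF _ H, lamP_hom hH (hX i) (by norm_num), add_zero,
      lamP_addF F Q (q i), hQq, lamP_hom hFh (hq2 i) (by norm_num), add_zero, add_zero]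
  | h2 i j =>
    have e1 : φ (MvPolynomial.X i * MvPolynomial.X j) = MvPolynomial.X i * MvPolynomial.X j +
        (MvPolynomial.X i * q j + MvPolynomial.X j * q i) + q i * q j := by
      rw [map_mul, hφX, hφX]; ring
    have e2 : lamP (F + Q) (q i * q j) = 0 :=
      lamP_pow hdG (hom_mem_pow ((hq2 i).mul (hq2 j)) (by norm_num))
    have e3 : ∀ i j, lamP Q (MvPolynomial.X i * q j) = 0 := fun i j =>
      lamP_hom hQh ((hX i).mul (hq2 j)) (by norm_num)
    rw [e1, lamP_add, lamP_add, lamP_add, e2, add_zero, lamP_addF _ H,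
      lamP_addF F Q (MvPolynomial.X i * q j), lamP_addF F Q (MvPolynomial.X j * q i), e3, e3,
      add_zero, add_zero, hpair]
  | h3 i j k =>
    have hh := ((hX i).mul (hX j)).mul (hX k)
    have h1 := phi_sub φ hφ 3 _ (hom_mem_pow hh (by norm_num))
    have h2 := lamP_pow hdG h1
    rw [lamP_sub, sub_eq_zero] at h2
    rw [h2, lamP_addF _ H, lamP_hom hH hh (by norm_num), add_zero]
  | h4 f hf =>
    have h1 := phi_sub φ hφ 4 _ hf
    have h2 := Ideal.add_mem _ (Ideal.pow_le_pow_right (by norm_num : 4 ≤ 5) h1) hf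
    rw [sub_add_cancel] at h2
    rw [lamP_pow hdG h2, lamP_pow hdF hf]
  | hadd f g hf hg => rw [map_add, lamP_add, lamP_add, hf, hg]
  | hsmul c f hf => rw [map_smul, lamP_smul, lamP_smul, hf]
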